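/- arXiv:2309.16096 — 4 statements merged into one kernel-verified Lean document; each statement's English description precedes it below -/
import Mathlib

section
/- Let n ≥ 1 and K ≥ 1 be natural numbers, let E := EuclideanSpace ℝ (Fin n), let 0 < ε ≤ 1 and δ ≥ 0. Suppose the classes are balanced, i.e. π k = 1/K for all k, and for each k let q k be a Borel probability measure on E with q k {x | ‖x‖ ≤ 1 − ε} = 1. Let f : E → Fin K be Borel measurable with robust risk R(f, ε) ≤ δ. Then for every class k : Fin K there exists a set S_k ⊆ {x | ‖x‖ ≤ 1} such that q k S_k ≥ 1 − K * δ and volume S_k ≤ C_max * Real.exp (−(n : ℝ) * ε), where C_max := the maximum over j : Fin K of volume {x | ‖x‖ ≤ 1 ∧ f x = j}. -/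
open MeasureTheory

/-- The robust risk of a classifier `f` against `ℓ2` perturbations of size `ε`,
for class priors `π` and class conditionals `q`, with data constrained to the
unit ball of `E`. -/
noncomputable def robustRisk {n K : ℕ}
    (π : Fin K → ℝ) (q : Fin K → Measure (EuclideanSpace ℝ (Fin n)))
    (f : EuclideanSpace ℝ (Fin n) → Fin K) (ε : ℝ) : ℝ :=
  ∑ k, π k * (q k {x | ∃ x', ‖x' - x‖ ≤ ε ∧ ‖x'‖ ≤ 1 ∧ f x' ≠ k}).toReal

/-!
A point of the ball of radius `1 - ε` is `(1 - ε) • y` for some `y` in the unit ball, and moving it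
to `y` is a perturbation of size `ε * ‖y‖ ≤ ε`. If no admissible perturbation takes the point out
of class `k`, then `y` is itself in class `k`. So the part of the small ball that is robustly
classified as `k` sits in a copy of class `k` contracted by `1 - ε`, and contraction costs a factor
`(1 - ε) ^ n ≤ exp (-n * ε)` in volume. By the bound on the risk, `q k` gives the remaining part
mass at most `δ / π k`.
-/

section

open Metric Module
open scoped Pointwise

theorem le_div_of_sum_mul_le {ι R : Type*} [Fintype ι] [Field R] [LinearOrder R]
    [IsStrictOrderedRing R] {w a : ι → R} {c : R} (hw : ∀ i, 0 ≤ w i) (ha : ∀ i, 0 ≤ a i)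
    (h : ∑ i, w i * a i ≤ c) {i : ι} (hi : 0 < w i) : a i ≤ c / w i := by
  rw [le_div_iff₀' hi]
  exact (Finset.single_le_sum (fun j _ ↦ mul_nonneg (hw j) (ha j)) (Finset.mem_univ i)).trans h

theorem one_sub_pow_le_exp_neg_mul {ε : ℝ} (hε : ε ≤ 1) (n : ℕ) :
    (1 - ε) ^ n ≤ Real.exp (-(n : ℝ) * ε) :=
  calc (1 - ε) ^ n ≤ Real.exp (-ε) ^ n :=
        pow_le_pow_left₀ (sub_nonneg.2 hε) (Real.one_sub_le_exp_neg ε) n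
    _ = Real.exp (-(n : ℝ) * ε) := by rw [← Real.exp_nat_mul, neg_mul_comm]

variable {E ι : Type*} [NormedAddCommGroup E]

/-- The points that a perturbation of size at most `ε` can take to a point of the unit ball outside
class `k` of the classifier `f`. The robust risk is the average over `k`, weighted by the priors, of
the mass that the conditional of class `k` gives to this set. Only the perturbed point has to lie in
the unit ball. -/
def vulnerableSet (f : E → ι) (ε : ℝ) (k : ι) : Set E :=
  {x | ∃ x', ‖x' - x‖ ≤ ε ∧ ‖x'‖ ≤ 1 ∧ f x' ≠ k}

variable [NormedSpace ℝ E]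

theorem sdiff_vulnerableSet_subset_smul {ε : ℝ} (hε : 0 ≤ ε) (hε1 : ε ≤ 1) (f : E → ι)
    (k : ι) :
    {x | ‖x‖ ≤ 1 - ε} \ vulnerableSet f ε k ⊆ (1 - ε) • {y | ‖y‖ ≤ 1 ∧ f y = k} := by
  rintro x ⟨hx, hrobust⟩
  rw [Set.mem_ofPred_eq, ← mem_closedBall_zero_iff,
    ← smul_unitClosedBall_of_nonneg (sub_nonneg.2 hε1)] at hx
  obtain ⟨y, hy, rfl⟩ := hx
  rw [mem_closedBall_zero_iff] at hy
  have hdist : ‖y - (1 - ε) • y‖ ≤ ε :=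
    calc ‖y - (1 - ε) • y‖ = ε * ‖y‖ := by
          rw [sub_smul, one_smul, sub_sub_cancel, norm_smul, Real.norm_of_nonneg hε]
      _ ≤ ε := mul_le_of_le_one_right hε hy
  exact Set.smul_mem_smul_set ⟨hy, by_contra fun hfy ↦ hrobust ⟨y, hdist, hy, hfy⟩⟩

variable [MeasurableSpace E] [BorelSpace E] [FiniteDimensional ℝ E]

theorem addHaar_one_sub_smul_le_mul_exp (μ : Measure E) [μ.IsAddHaarMeasure] {ε : ℝ} (hε : ε ≤ 1)
    (A : Set E) :
    μ ((1 - ε) • A) ≤ μ A * ENNReal.ofReal (Real.exp (-(finrank ℝ E : ℝ) * ε)) := by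
  rw [Measure.addHaar_smul_of_nonneg μ (sub_nonneg.2 hε), mul_comm]
  gcongr
  exact one_sub_pow_le_exp_neg_mul hε _

theorem all_classes_concentrated_of_balanced_general [Fintype ι] (μ : Measure E)
    [μ.IsAddHaarMeasure] {ε δ : ℝ} (hε : 0 ≤ ε) (hε1 : ε ≤ 1) {π : ι → ℝ} (hπ : ∀ k, 0 ≤ π k)
    (q : ι → Measure E) [∀ k, IsFiniteMeasure (q k)] (f : E → ι)
    (hrisk : ∑ k, π k * (q k).real (vulnerableSet f ε k) ≤ δ) {k : ι} (hk : 0 < π k) :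
    ∃ S : Set E, S ⊆ {x | ‖x‖ ≤ 1} ∧
      (q k).real {x | ‖x‖ ≤ 1 - ε} - δ / π k ≤ (q k).real S ∧
      μ S ≤ μ {x | ‖x‖ ≤ 1 ∧ f x = k} *
        ENNReal.ofReal (Real.exp (-(finrank ℝ E : ℝ) * ε)) := by
  have hvulnerable : (q k).real (vulnerableSet f ε k) ≤ δ / π k :=
    le_div_of_sum_mul_le hπ (fun _ ↦ measureReal_nonneg) hrisk hk
  refine ⟨{x | ‖x‖ ≤ 1 - ε} \ vulnerableSet f ε k, ?_, ?_, ?_⟩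
  · exact fun x hx ↦ le_trans hx.1 (sub_le_self 1 hε)
  · exact (sub_le_sub_left hvulnerable _).trans le_measureReal_sdiff
  · exact (measure_mono (sdiff_vulnerableSet_subset_smul hε hε1 f k)).trans
      (addHaar_one_sub_smul_le_mul_exp μ hε1 _)

end

theorem all_classes_concentrated_of_balanced
    (n K : ℕ) (hn : 1 ≤ n) (hK : 1 ≤ K)
    (ε δ : ℝ) (hε : 0 < ε) (hε1 : ε ≤ 1) (hδ : 0 ≤ δ)
    (π : Fin K → ℝ) (hπ : ∀ k, π k = 1 / K)
    (q : Fin K → Measure (EuclideanSpace ℝ (Fin n)))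
    (hq : ∀ k, IsProbabilityMeasure (q k))
    (hsupp : ∀ k, q k {x | ‖x‖ ≤ 1 - ε} = 1)
    (f : EuclideanSpace ℝ (Fin n) → Fin K) (hf : Measurable f)
    (hrisk : robustRisk π q f ε ≤ δ) :
    ∀ k : Fin K, ∃ S : Set (EuclideanSpace ℝ (Fin n)),
      S ⊆ {x | ‖x‖ ≤ 1} ∧
      1 - K * δ ≤ (q k S).toReal ∧
      volume S ≤ (⨆ j : Fin K, volume {x | ‖x‖ ≤ 1 ∧ f x = j}) *
        ENNReal.ofReal (Real.exp (-(n : ℝ) * ε)) := by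
  intro k
  obtain ⟨S, hS, hmass, hvol⟩ := all_classes_concentrated_of_balanced_general volume hε.le hε1
    (fun j ↦ by rw [hπ j]; positivity) q f hrisk (k := k) (by rw [hπ k]; positivity)
  rw [finrank_euclideanSpace_fin] at hvol
  refine ⟨S, hS, by simpa [Measure.real, hsupp, hπ, mul_comm] using hmass, hvol.trans ?_⟩
  gcongr
  exact le_iSup (fun j ↦ volume {x | ‖x‖ ≤ 1 ∧ f x = j}) k
end

section
/- With the dual-projection setup: let Z be any type and Agg : Set ι → Z any function, and define the dual classifier g : E → Z by g(y) := Agg(Active(λ • y)). Then g is certified on the polyhedron C(x): for every x' ∈ E with λ • x' ∈ C(x), g(x') = g(x). -/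
/-!
Let `d` be a feasible point and `v` a conic combination of the normals of the constraints active
at `d`. Every feasible `p` satisfies `0 ≤ ⟪v, d - p⟫`, so
`‖d + v - p‖ ^ 2 ≥ ‖v‖ ^ 2 + ‖d - p‖ ^ 2` and `d` is the unique nearest feasible point to `d + v`.
Consequently the projection maps all of `F + V` into the face `F`, on which the active set is
constant.
-/

open scoped RealInnerProductSpace Pointwise

section ConicHull

variable {R M ι : Type*} [Semiring R] [PartialOrder R] [IsOrderedRing R]
  [AddCommMonoid M] [Module R M]

theorem coe_hull_image_eq_setOf_sum [Fintype ι] (v : ι → M) (s : Set ι) :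
    (PointedCone.hull R (v '' s) : Set M) =
      {x | ∃ α : ι → R, (∀ i, 0 ≤ α i) ∧ (∀ i ∉ s, α i = 0) ∧ x = ∑ i, α i • v i} := by
  ext x
  constructor
  · intro hx
    obtain ⟨l, hl, rfl⟩ := (Finsupp.mem_span_image_iff_linearCombination _).mp hx
    refine ⟨fun i => l i, fun i => (l i).2, fun i hi => ?_, ?_⟩
    · simp [Finsupp.notMem_support_iff.mp fun h => hi (hl h)]
    · exact Finsupp.sum_fintype _ _ fun i => zero_smul _ (v i)
  · rintro ⟨α, hα, hαs, rfl⟩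
    refine Submodule.sum_mem _ fun i _ => ?_
    by_cases hi : i ∈ s
    · exact PointedCone.smul_mem _ (hα i) (PointedCone.subset_hull ⟨i, hi, rfl⟩)
    · simp [hαs i hi]

end ConicHull

section InnerProductSpace

variable {E ι : Type*} [NormedAddCommGroup E] [InnerProductSpace ℝ E]

theorem eq_of_norm_sub_le_norm_sub_of_inner_nonneg {y p d : E}
    (hle : ‖y - p‖ ≤ ‖y - d‖) (hinner : 0 ≤ ⟪y - d, d - p⟫) : p = d := by
  have hexpand : ‖y - p‖ ^ 2 = ‖y - d‖ ^ 2 + 2 * ⟪y - d, d - p⟫ + ‖d - p‖ ^ 2 := by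
    rw [← norm_add_sq_real, sub_add_sub_cancel]
  have hsq : ‖y - p‖ ^ 2 ≤ ‖y - d‖ ^ 2 := by gcongr
  have hzero : ‖d - p‖ ^ 2 = 0 := le_antisymm (by linarith) (sq_nonneg _)
  exact (sub_eq_zero.mp (norm_eq_zero.mp (sq_eq_zero_iff.mp hzero))).symm

theorem inner_nonneg_of_mem_hull {s : Set E} {v w : E} (hv : v ∈ PointedCone.hull ℝ s)
    (hw : ∀ u ∈ s, 0 ≤ ⟪u, w⟫) : 0 ≤ ⟪v, w⟫ := by
  have hdual : w ∈ PointedCone.dual (innerₗ E) (PointedCone.hull ℝ s : Set E) := by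
    rw [PointedCone.dual_hull]
    exact fun u hu => hw u hu
  exact hdual hv

/-- The intersection of the half-spaces `⟪t i, d⟫ ≤ b i`. The polar `K°` is the case `b = 1`. -/
def feasibleSet (t : ι → E) (b : ι → ℝ) : Set E := {d | ∀ i, ⟪t i, d⟫ ≤ b i}

/-- The indices of the constraints of `feasibleSet t b` that are tight at `d`. -/
def activeSet (t : ι → E) (b : ι → ℝ) (d : E) : Set ι := {i | ⟪t i, d⟫ = b i}

/-- The face `F` of `feasibleSet t b` on which exactly the constraints in `A` are tight;
for finite `ι` it is relatively open. -/
def openFace (t : ι → E) (b : ι → ℝ) (A : Set ι) : Set E :=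
  {d | (∀ i ∈ A, ⟪t i, d⟫ = b i) ∧ ∀ i ∉ A, ⟪t i, d⟫ < b i}

/-- The set `C = F + V` of points certified by the active set `A`, with the cone `V` encoded as the
conic hull of the normals `t i`, `i ∈ A`, so that `ι` may be infinite. -/
def certifiedRegion (t : ι → E) (b : ι → ℝ) (A : Set ι) : Set E :=
  openFace t b A + (PointedCone.hull ℝ (t '' A) : Set E)

variable {t : ι → E} {b : ι → ℝ} {A : Set ι} {y p d v : E}

theorem mem_openFace_iff : d ∈ openFace t b A ↔ d ∈ feasibleSet t b ∧ activeSet t b d = A := by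
  constructor
  · rintro ⟨htight, hslack⟩
    refine ⟨fun i => ?_, Set.ext fun i => ⟨fun hi => ?_, htight i⟩⟩
    · by_cases hi : i ∈ A
      · exact (htight i hi).le
      · exact (hslack i hi).le
    · by_contra hiA
      exact (hslack i hiA).ne hi
  · rintro ⟨hd, rfl⟩
    exact ⟨fun _ hi => hi, fun i hi => (hd i).lt_of_ne hi⟩

theorem inner_sub_nonneg_of_mem_hull_activeSet
    (hv : v ∈ PointedCone.hull ℝ (t '' activeSet t b d)) (hp : p ∈ feasibleSet t b) :
    0 ≤ ⟪v, d - p⟫ := by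
  refine inner_nonneg_of_mem_hull hv ?_
  rintro _ ⟨i, hi : ⟪t i, d⟫ = b i, rfl⟩
  rw [inner_sub_right, hi]
  exact sub_nonneg.mpr (hp i)

theorem eq_of_isMinOn_norm_add_sub_of_mem_hull_activeSet (hd : d ∈ feasibleSet t b)
    (hv : v ∈ PointedCone.hull ℝ (t '' activeSet t b d)) (hp : p ∈ feasibleSet t b)
    (hmin : IsMinOn (fun z => ‖d + v - z‖) (feasibleSet t b) p) : p = d := by
  apply eq_of_norm_sub_le_norm_sub_of_inner_nonneg (isMinOn_iff.mp hmin d hd)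
  rw [add_sub_cancel_left]
  exact inner_sub_nonneg_of_mem_hull_activeSet hv hp

theorem activeSet_eq_of_isMinOn_of_mem_certifiedRegion (hy : y ∈ certifiedRegion t b A)
    (hp : p ∈ feasibleSet t b) (hmin : IsMinOn (fun z => ‖y - z‖) (feasibleSet t b) p) :
    activeSet t b p = A := by
  obtain ⟨d, hd, v, hv, rfl⟩ := Set.mem_add.mp hy
  obtain ⟨hd_feasible, rfl⟩ := mem_openFace_iff.mp hd
  rw [eq_of_isMinOn_norm_add_sub_of_mem_hull_activeSet hd_feasible hv hp hmin]

theorem dual_classifier_certified_general (t : ι → E) (b : ι → ℝ) (P : E → E)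
    (hPmem : ∀ y, P y ∈ feasibleSet t b)
    (hPmin : ∀ y, IsMinOn (fun z => ‖y - z‖) (feasibleSet t b) (P y))
    (x : E) (lam : ℝ) {Z : Type*} (Agg : Set ι → Z) (g : E → Z)
    (hg : ∀ y, g y = Agg (activeSet t b (P (lam • y))))
    (x' : E) (hx' : lam • x' ∈ certifiedRegion t b (activeSet t b (P (lam • x)))) :
    g x' = g x := by
  rw [hg, hg, activeSet_eq_of_isMinOn_of_mem_certifiedRegion hx' (hPmem _) (hPmin _)]

end InnerProductSpace

theorem dual_classifier_certified
    {n : ℕ} {ι : Type*} [Fintype ι] (t : ι → EuclideanSpace ℝ (Fin n))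
    -- `P` is the metric projection onto the polar polyhedron `K° = {d | ∀ i, ⟪t i, d⟫ ≤ 1}`
    (P : EuclideanSpace ℝ (Fin n) → EuclideanSpace ℝ (Fin n))
    (hPmem : ∀ y, P y ∈ {d : EuclideanSpace ℝ (Fin n) | ∀ i, ⟪t i, d⟫ ≤ 1})
    (hPnear : ∀ y, ∀ z ∈ {d : EuclideanSpace ℝ (Fin n) | ∀ i, ⟪t i, d⟫ ≤ 1},
      ‖y - P y‖ ≤ ‖y - z‖)
    (x : EuclideanSpace ℝ (Fin n)) (lam : ℝ) (hlam : 0 < lam)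
    -- the active set `A := Active (lam • x)`
    (A : Set ι) (hA : A = {i | ⟪t i, P (lam • x)⟫ = 1})
    -- the face `F`, the cone `V`, and the certified polyhedron `C = F + V`
    (F V C : Set (EuclideanSpace ℝ (Fin n)))
    (hF : F = {d | (∀ i ∈ A, ⟪t i, d⟫ = 1) ∧ (∀ i ∉ A, ⟪t i, d⟫ < 1)})
    (hV : V = {v | ∃ α : ι → ℝ, (∀ i, 0 ≤ α i) ∧ (∀ i ∉ A, α i = 0) ∧ v = ∑ i, α i • t i})
    (hC : C = F + V)
    -- the dual classifier obtained by aggregating labels over the active set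
    {Z : Type*} (Agg : Set ι → Z)
    (g : EuclideanSpace ℝ (Fin n) → Z)
    (hg : ∀ y, g y = Agg {i | ⟪t i, P (lam • y)⟫ = 1})
    (x' : EuclideanSpace ℝ (Fin n)) (hx' : lam • x' ∈ C) :
    g x' = g x := by
  subst hA hF hV hC
  refine dual_classifier_certified_general t (fun _ => 1) P hPmem
    (fun y => isMinOn_iff.mpr (hPnear y)) x lam Agg g hg x' ?_
  rwa [certifiedRegion, coe_hull_image_eq_setOf_sum]
end

section
/- Let n ≥ 2, let E := EuclideanSpace ℝ (Fin n), let α > 0, γ := Real.exp (−α), and ε ≥ 0. Let S₁ := {x : E | (∀ i, |x i| ≤ 1) ∧ |x 0| ≤ γ/2} and S₂ := {x : E | (∀ i, |x i| ≤ 1) ∧ |x 1| ≤ γ/2}, and let q₁, q₂ be the uniform probability measures on S₁ and S₂ respectively. Define f : E → Fin 2 by f x = 2 if |x 1| ≤ γ/2 + ε and |x 0| > γ/2 + ε, and f x = 1 otherwise. Then the robust risk against ℓ2-perturbations of size ε within the ℓ∞ unit ball satisfies (1/2) * q₁ {x | ∃ x', ‖x' − x‖ ≤ ε ∧ (∀ i,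 |x' i| ≤ 1) ∧ f x' ≠ 1} + (1/2) * q₂ {x | ∃ x', ‖x' − x‖ ≤ ε ∧ (∀ i, |x' i| ≤ 1) ∧ f x' ≠ 2} ≤ (Real.exp (−α) + 4 * ε) / 2, where ‖·‖ is the Euclidean norm. -/
open MeasureTheory

/-!
A perturbation of Euclidean size `ε` moves each coordinate by at most `ε`. Hence a point of `S₁`,
where `|x 0| ≤ γ / 2`, is never pushed past the threshold `γ / 2 + ε`, and the first class
contributes no risk. A point of `S₂` can be pushed into an error only if `|x 0| ≤ γ / 2 + 2 * ε`;
coordinate `0` is uniform on `[-1, 1]` under `q₂`, so this has probability at most `γ / 2 + 2 * ε`.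
-/

section

open ProbabilityTheory

variable {ι : Type*}

/-- The box `∏ k, [-b k, b k]` in Euclidean space, empty as soon as some `b k` is negative. -/
def symmBox (b : ι → ℝ) : Set (EuclideanSpace ℝ ι) := {x | ∀ k, |x k| ≤ b k}

/-- The points of the `ℓ∞` unit ball within distance `r` of the hyperplane `x i = 0`: the support of
one class of the data distribution. -/
def slab (i : ι) (r : ℝ) : Set (EuclideanSpace ℝ ι) := {x | (∀ k, |x k| ≤ 1) ∧ |x i| ≤ r}

/-- The classifier that answers `2` near the hyperplane `x j = 0` but away from `x i = 0`, and `1`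
elsewhere. The labels are the two elements of `Fin 2`, in which `2 = 0`. -/
noncomputable def slabClassifier (i j : ι) (t : ℝ) (x : EuclideanSpace ℝ ι) : Fin 2 :=
  if |x j| ≤ t ∧ t < |x i| then 2 else 1

lemma symmBox_inter_abs_apply_le [DecidableEq ι] (b : ι → ℝ) (i : ι) (t : ℝ) :
    symmBox b ∩ {x | |x i| ≤ t} = symmBox (Function.update b i (min (b i) t)) := by
  ext x
  have hupdate := Function.forall_update_iff b (a := i) (b := min (b i) t)
    (fun k c => |x k| ≤ c)
  simp only [symmBox, Set.mem_inter_iff, Set.mem_ofPred_eq, hupdate, le_min_iff]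
  grind

lemma slab_eq_symmBox [DecidableEq ι] (i : ι) (r : ℝ) :
    slab i r = symmBox (Function.update 1 i (min 1 r)) :=
  symmBox_inter_abs_apply_le 1 i r

lemma symmBox_eq_preimage_pi_Icc (b : ι → ℝ) :
    symmBox b = (MeasurableEquiv.toLp 2 (ι → ℝ)).symm ⁻¹'
      Set.univ.pi fun k => Set.Icc (-b k) (b k) := by
  ext x
  simp [symmBox, abs_le, Pi.le_def, forall_and]

lemma measurableSet_symmBox [Countable ι] (b : ι → ℝ) : MeasurableSet (symmBox b) := by
  rw [symmBox_eq_preimage_pi_Icc]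
  exact (MeasurableEquiv.measurable _) (.univ_pi fun _ => measurableSet_Icc)

lemma measurableSet_slab [Countable ι] (i : ι) (r : ℝ) : MeasurableSet (slab i r) := by
  classical
  rw [slab_eq_symmBox]
  exact measurableSet_symmBox _

variable [Fintype ι]

/-- The points that some perturbation of Euclidean norm at most `ε`, staying in the `ℓ∞` unit ball,
moves to a point to which `f` does not assign the label `y`. -/
def robustErrorSet {Y : Type*} (f : EuclideanSpace ℝ ι → Y) (y : Y) (ε : ℝ) :
    Set (EuclideanSpace ℝ ι) :=
  {x | ∃ x', ‖x' - x‖ ≤ ε ∧ (∀ i, |x' i| ≤ 1) ∧ f x' ≠ y}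

lemma volume_symmBox (b : ι → ℝ) : volume (symmBox b) = ∏ k, ENNReal.ofReal (2 * b k) := by
  rw [symmBox_eq_preimage_pi_Icc,
    (EuclideanSpace.volume_preserving_symm_measurableEquiv_toLp ι).measure_preimage_equiv,
    volume_pi_pi]
  simp only [Real.volume_Icc, sub_neg_eq_add, two_mul]

lemma volume_symmBox_ne_zero {b : ι → ℝ} (hb : ∀ k, 0 < b k) : volume (symmBox b) ≠ 0 := by
  rw [volume_symmBox, Finset.prod_ne_zero_iff]
  intro k _
  simpa using hb k

lemma volume_symmBox_ne_top (b : ι → ℝ) : volume (symmBox b) ≠ ⊤ := by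
  rw [volume_symmBox]
  exact ENNReal.prod_ne_top fun _ _ => ENNReal.ofReal_ne_top

lemma volume_symmBox_update [DecidableEq ι] {b : ι → ℝ} {i : ι} (hi : 0 < b i) (s : ℝ) :
    volume (symmBox (Function.update b i s)) = ENNReal.ofReal (s / b i) * volume (symmBox b) := by
  have hfactor : ENNReal.ofReal (2 * s) =
      ENNReal.ofReal (s / b i) * ENNReal.ofReal (2 * b i) := by
    rw [← ENNReal.ofReal_mul' (by positivity)]
    congr 1
    field_simp
  have hrest : ∏ k ∈ Finset.univ.erase i, ENNReal.ofReal (2 * Function.update b i s k) =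
      ∏ k ∈ Finset.univ.erase i, ENNReal.ofReal (2 * b k) :=
    Finset.prod_congr rfl fun k hk => by
      rw [Function.update_of_ne (Finset.ne_of_mem_erase hk)]
  rw [volume_symmBox, volume_symmBox, ← Finset.mul_prod_erase _ _ (Finset.mem_univ i),
    ← Finset.mul_prod_erase _ _ (Finset.mem_univ i), Function.update_self, hrest, hfactor,
    mul_assoc]

lemma cond_symmBox_abs_apply_le {b : ι → ℝ} (hb : ∀ k, 0 < b k) (i : ι) (t : ℝ) :
    volume[{x | |x i| ≤ t} | symmBox b] = ENNReal.ofReal (min (b i) t / b i) := by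
  classical
  rw [cond_apply (measurableSet_symmBox b), symmBox_inter_abs_apply_le,
    volume_symmBox_update (hb i), mul_left_comm,
    ENNReal.inv_mul_cancel (volume_symmBox_ne_zero hb) (volume_symmBox_ne_top b), mul_one]

lemma cond_slab_eq_div (i : ι) (r : ℝ) (B : Set (EuclideanSpace ℝ ι)) :
    volume[B | slab i r] = volume (B ∩ slab i r) / volume (slab i r) := by
  rw [cond_apply (measurableSet_slab i r), Set.inter_comm, mul_comm, div_eq_mul_inv]

lemma cond_slab_abs_apply_le {i j : ι} (hij : i ≠ j) {r : ℝ} (hr : 0 < r) (t : ℝ) :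
    volume[{x | |x i| ≤ t} | slab j r] = ENNReal.ofReal (min 1 t) := by
  classical
  have hpos : ∀ k, 0 < Function.update (1 : ι → ℝ) j (min 1 r) k := by
    intro k
    rcases eq_or_ne k j with rfl | hk
    · simpa using hr
    · simp [hk]
  rw [slab_eq_symmBox, cond_symmBox_abs_apply_le hpos, Function.update_of_ne hij, Pi.one_apply,
    div_one]

lemma abs_apply_le_abs_apply_add {x y : EuclideanSpace ℝ ι} {ε : ℝ} (h : ‖y - x‖ ≤ ε) (i : ι) :
    |y i| ≤ |x i| + ε := by
  have hcoord : |y i - x i| ≤ ε := (PiLp.norm_apply_le (y - x) i).trans h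
  linarith [abs_sub_abs_le_abs_sub (y i) (x i)]

lemma disjoint_slab_robustErrorSet_one (i j : ι) (r ε : ℝ) :
    Disjoint (slab i r) (robustErrorSet (slabClassifier i j (r + ε)) 1 ε) := by
  rw [Set.disjoint_left]
  rintro x ⟨-, hxi⟩ ⟨x', hdist, -, herr⟩
  have hx'i : |x' i| ≤ r + ε := by linarith [abs_apply_le_abs_apply_add hdist i]
  exact herr (if_neg fun h => h.2.not_ge hx'i)

lemma slab_inter_robustErrorSet_two_subset (i j : ι) (r ε : ℝ) :
    slab j r ∩ robustErrorSet (slabClassifier i j (r + ε)) 2 ε ⊆ {x | |x i| ≤ r + 2 * ε} := by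
  rintro x ⟨⟨-, hxj⟩, x', hdist, -, herr⟩
  have hx'j : |x' j| ≤ r + ε := by linarith [abs_apply_le_abs_apply_add hdist j]
  have hx'i : |x' i| ≤ r + ε := by
    by_contra! hlt
    exact herr (if_pos ⟨hx'j, hlt⟩)
  rw [norm_sub_rev] at hdist
  change |x i| ≤ r + 2 * ε
  linarith [abs_apply_le_abs_apply_add hdist i]

lemma cond_slab_robustErrorSet_one (i j : ι) (r ε : ℝ) :
    volume[robustErrorSet (slabClassifier i j (r + ε)) 1 ε | slab i r] = 0 := by
  rw [cond_apply (measurableSet_slab i r), (disjoint_slab_robustErrorSet_one i j r ε).inter_eq,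
    measure_empty, mul_zero]

lemma cond_slab_robustErrorSet_two_le {i j : ι} (hij : i ≠ j) {r : ℝ} (hr : 0 < r) (ε : ℝ) :
    volume[robustErrorSet (slabClassifier i j (r + ε)) 2 ε | slab j r] ≤
      ENNReal.ofReal (r + 2 * ε) := by
  rw [← cond_inter_self (measurableSet_slab j r)]
  calc _ ≤ volume[{x | |x i| ≤ r + 2 * ε} | slab j r] :=
        measure_mono (slab_inter_robustErrorSet_two_subset i j r ε)
    _ = ENNReal.ofReal (min 1 (r + 2 * ε)) := cond_slab_abs_apply_le hij hr _
    _ ≤ ENNReal.ofReal (r + 2 * ε) := ENNReal.ofReal_le_ofReal (min_le_right _ _)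

theorem subspace_example_robust_risk_general {i j : ι} (hij : i ≠ j) {γ : ℝ} (hγ : 0 < γ) (ε : ℝ) :
    (1 / 2) * volume[robustErrorSet (slabClassifier i j (γ / 2 + ε)) 1 ε | slab i (γ / 2)] +
      (1 / 2) * volume[robustErrorSet (slabClassifier i j (γ / 2 + ε)) 2 ε | slab j (γ / 2)] ≤
    ENNReal.ofReal ((γ + 4 * ε) / 4) := by
  have hhalf : (1 / 2 : ENNReal) = ENNReal.ofReal (1 / 2) := by
    rw [ENNReal.ofReal_div_of_pos two_pos, ENNReal.ofReal_one, ENNReal.ofReal_ofNat]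
  rw [cond_slab_robustErrorSet_one, mul_zero, zero_add]
  calc _ ≤ 1 / 2 * ENNReal.ofReal (γ / 2 + 2 * ε) := by
        gcongr
        exact cond_slab_robustErrorSet_two_le hij (half_pos hγ) ε
    _ = ENNReal.ofReal ((γ + 4 * ε) / 4) := by
        rw [hhalf, ← ENNReal.ofReal_mul (by norm_num)]
        ring_nf

end

theorem subspace_example_robust_risk
    (n : ℕ) (hn : 2 ≤ n)
    (α : ℝ) (hα : 0 < α) (γ : ℝ) (hγ : γ = Real.exp (-α)) (ε : ℝ) (hε : 0 ≤ ε)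
    (S₁ S₂ : Set (EuclideanSpace ℝ (Fin n)))
    (hS₁ : S₁ = {x | (∀ i, |x i| ≤ 1) ∧ |x ⟨0, by omega⟩| ≤ γ / 2})
    (hS₂ : S₂ = {x | (∀ i, |x i| ≤ 1) ∧ |x ⟨1, by omega⟩| ≤ γ / 2})
    -- `q₁`, `q₂` are the uniform probability measures on `S₁`, `S₂`
    (q₁ q₂ : Set (EuclideanSpace ℝ (Fin n)) → ENNReal)
    (hq₁ : ∀ B, q₁ B = volume (B ∩ S₁) / volume S₁)
    (hq₂ : ∀ B, q₂ B = volume (B ∩ S₂) / volume S₂)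
    -- the classifier: `f x = 2` iff `|x 1| ≤ γ/2 + ε` and `|x 0| > γ/2 + ε`, else `f x = 1`
    (f : EuclideanSpace ℝ (Fin n) → Fin 2)
    (hf2 : ∀ x, (|x ⟨1, by omega⟩| ≤ γ / 2 + ε ∧ γ / 2 + ε < |x ⟨0, by omega⟩|) → f x = 2)
    (hf1 : ∀ x, ¬(|x ⟨1, by omega⟩| ≤ γ / 2 + ε ∧ γ / 2 + ε < |x ⟨0, by omega⟩|) → f x = 1) :
    (1 / 2) * q₁ {x | ∃ x', ‖x' - x‖ ≤ ε ∧ (∀ i, |x' i| ≤ 1) ∧ f x' ≠ 1} +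
      (1 / 2) * q₂ {x | ∃ x', ‖x' - x‖ ≤ ε ∧ (∀ i, |x' i| ≤ 1) ∧ f x' ≠ 2} ≤
    ENNReal.ofReal ((Real.exp (-α) + 4 * ε) / 2) := by
  have hf : f = slabClassifier ⟨0, by omega⟩ ⟨1, by omega⟩ (γ / 2 + ε) := by
    funext x
    unfold slabClassifier
    split_ifs with hx
    exacts [hf2 x hx, hf1 x hx]
  have hγ0 : 0 < γ := hγ ▸ Real.exp_pos _
  have hrisk := subspace_example_robust_risk_general (i := (⟨0, by omega⟩ : Fin n))
    (j := ⟨1, by omega⟩) (by simp) hγ0 ε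
  rw [cond_slab_eq_div, cond_slab_eq_div, ← hf] at hrisk
  rw [hq₁, hq₂, hS₁, hS₂, ← hγ]
  exact hrisk.trans (ENNReal.ofReal_le_ofReal (by linarith))
end

section
/- Let n, M ≥ 1, let E := EuclideanSpace ℝ (Fin n), let x ∈ E, λ > 0, and s : Fin M → E. Suppose c* : Fin M → ℝ minimizes c ↦ (∑ i, |c i|) + (λ/2) * ‖x − ∑ i, c i • s i‖² over all c : Fin M → ℝ, and set d* := λ • (x − ∑ i, c* i • s i). Then: (i) |⟪s i, d*⟫| ≤ 1 for every i; (ii) for every i with c* i > 0, ⟪s i, d*⟫ = 1, and for every i with c* i < 0, ⟪s i, d*⟫ = −1; and (iii) d* maximizes d ↦ ⟪x, d⟫ − ‖d‖²/(2λ) over the set {d : E | ∀ i, |⟪s i, d⟫| ≤ 1}. -/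
open scoped RealInnerProductSpace

/-!
By Fermat's rule for a convex plus a smooth function, minimality of `c⋆` makes `Sᵀ d⋆`, with
`d⋆ = λ (x - S c⋆)`, a subgradient of `‖·‖₁` at `c⋆`. A subgradient `φ` of a seminorm `p` at `a`
is a linear functional dominated by `p` that touches it at `a`. Domination by `‖·‖₁`, tested on
the coordinate vectors, is dual feasibility; touching is equality in
`∑ i, c⋆ i * ⟪s i, d⋆⟫ ≤ ∑ i, |c⋆ i|`, hence equality in each term. Touching also says that the
dual value of `d⋆` equals the primal value of `c⋆`, which bounds all feasible dual values by weak
duality.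
-/

section Subgradient

variable {F : Type*} [AddCommGroup F] [Module ℝ F]

theorem sub_le_of_isMinOn_convexOn_add {f g : F → ℝ} {K : Set F} {a b : F} {g' : ℝ}
    (hf : ConvexOn ℝ K f) (hg : HasLineDerivAt ℝ g g' a (b - a))
    (hmin : IsMinOn (fun z => f z + g z) K a) (ha : a ∈ K) (hb : b ∈ K) :
    f a - g' ≤ f b := by
  suffices f a - f b ≤ g' by linarith
  refine ge_of_tendsto hg.tendsto_slope_zero_right ?_
  filter_upwards [Ioo_mem_nhdsGT (zero_lt_one' ℝ)] with t ⟨ht₀, ht₁⟩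
  have combo : a + t • (b - a) = (1 - t) • a + t • b := by module
  have mem : a + t • (b - a) ∈ K :=
    combo ▸ hf.1 ha hb (sub_nonneg.2 ht₁.le) ht₀.le (sub_add_cancel 1 t)
  have convex : f (a + t • (b - a)) ≤ (1 - t) * f a + t * f b :=
    combo ▸ hf.2 ha hb (sub_nonneg.2 ht₁.le) ht₀.le (sub_add_cancel 1 t)
  have minimal : f a + g a ≤ f (a + t • (b - a)) + g (a + t • (b - a)) := hmin mem
  rw [smul_eq_mul, le_inv_mul_iff₀ ht₀]
  linarith

theorem le_seminorm_and_eq_of_subgradient {p : Seminorm ℝ F} {φ : F →ₗ[ℝ] ℝ} {a : F}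
    (h : ∀ b, p a + φ (b - a) ≤ p b) : (∀ b, φ b ≤ p b) ∧ φ a = p a := by
  have dominated (b : F) : φ b ≤ p b := by
    have subgradient := h (a + b)
    rw [add_sub_cancel_left] at subgradient
    linarith [map_add_le_add p a b]
  have touches : p a ≤ φ a := by simpa using h 0
  exact ⟨dominated, (dominated a).antisymm touches⟩

end Subgradient

section Duality

variable {F E : Type*} [AddCommGroup F] [Module ℝ F]
  [NormedAddCommGroup E] [InnerProductSpace ℝ E]

/-- The objective `p c + (λ/2) ‖x - A c‖²` of the least-squares reconstruction of `x` by `A`,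
regularized by the seminorm `p`. -/
noncomputable def primalObjective (p : Seminorm ℝ F) (A : F →ₗ[ℝ] E) (x : E) (lam : ℝ) (c : F) :
    ℝ :=
  p c + lam / 2 * ‖x - A c‖ ^ 2

/-- The objective `⟪x, d⟫ - ‖d‖² / (2λ)` of the Fenchel dual of `primalObjective`. -/
noncomputable def dualObjective (x : E) (lam : ℝ) (d : E) : ℝ :=
  ⟪x, d⟫ - ‖d‖ ^ 2 / (2 * lam)

/-- The constraint of the Fenchel dual of `primalObjective`: `Aᵀ d` lies in the unit ball of the
norm dual to `p`. Since `p` is even, no absolute value is needed. -/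
def DualFeasible (p : Seminorm ℝ F) (A : F →ₗ[ℝ] E) (d : E) : Prop :=
  ∀ c, ⟪d, A c⟫ ≤ p c

variable {p : Seminorm ℝ F} {A : F →ₗ[ℝ] E} {x d : E} {lam : ℝ} {a : F}

theorem hasLineDerivAt_half_mul_norm_sub_sq (A : F →ₗ[ℝ] E) (x : E) (lam : ℝ) (a v : F) :
    HasLineDerivAt ℝ (fun c => lam / 2 * ‖x - A c‖ ^ 2) (-⟪lam • (x - A a), A v⟫) a v := by
  have residual : HasDerivAt (fun t : ℝ => x - A (a + t • v)) (-A v) 0 := by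
    simpa using ((hasDerivAt_id (0 : ℝ)).smul_const (A v)).const_add (A a) |>.const_sub x
  refine (residual.norm_sq.const_mul (lam / 2)).congr_deriv ?_
  simp only [zero_smul, add_zero, inner_neg_right, real_inner_smul_left]
  ring

theorem dualFeasible_and_inner_eq_of_isMinOn
    (hmin : IsMinOn (primalObjective p A x lam) Set.univ a) :
    DualFeasible p A (lam • (x - A a)) ∧ ⟪lam • (x - A a), A a⟫ = p a := by
  refine le_seminorm_and_eq_of_subgradient (φ := innerₗ E (lam • (x - A a)) ∘ₗ A) fun b => ?_
  have fermat := sub_le_of_isMinOn_convexOn_add p.convexOn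
    (hasLineDerivAt_half_mul_norm_sub_sq A x lam a (b - a)) hmin (Set.mem_univ a) (Set.mem_univ b)
  rwa [sub_neg_eq_add] at fermat

theorem dualObjective_eq_sub (hlam : lam ≠ 0) (r y d : E) :
    dualObjective (y + r) lam d =
      ⟪d, y⟫ + lam / 2 * ‖r‖ ^ 2 - ‖lam • r - d‖ ^ 2 / (2 * lam) := by
  rw [dualObjective, norm_sub_sq_real, norm_smul, mul_pow, Real.norm_eq_abs, sq_abs,
    real_inner_smul_left, inner_add_left, real_inner_comm]
  field_simp
  ring

theorem dualObjective_le_primalObjective (hlam : 0 < lam) (hd : DualFeasible p A d) (c : F) :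
    dualObjective x lam d ≤ primalObjective p A x lam c := by
  have gap_nonneg : 0 ≤ ‖lam • (x - A c) - d‖ ^ 2 / (2 * lam) := by positivity
  have completed_square := dualObjective_eq_sub hlam.ne' (x - A c) (A c) d
  rw [add_sub_cancel] at completed_square
  rw [completed_square, primalObjective]
  linarith [hd c]

theorem dualObjective_eq_primalObjective (hlam : lam ≠ 0)
    (h : ⟪lam • (x - A a), A a⟫ = p a) :
    dualObjective x lam (lam • (x - A a)) = primalObjective p A x lam a := by
  have completed_square := dualObjective_eq_sub hlam (x - A a) (A a) (lam • (x - A a))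
  rw [add_sub_cancel] at completed_square
  simp [completed_square, h, primalObjective]

theorem isMaxOn_dualObjective_of_isMinOn (hlam : 0 < lam)
    (hmin : IsMinOn (primalObjective p A x lam) Set.univ a) :
    IsMaxOn (dualObjective x lam) {d | DualFeasible p A d} (lam • (x - A a)) := by
  intro d hd
  calc dualObjective x lam d
      ≤ primalObjective p A x lam a := dualObjective_le_primalObjective hlam hd a
    _ = dualObjective x lam (lam • (x - A a)) :=
      (dualObjective_eq_primalObjective hlam.ne'
        (dualFeasible_and_inner_eq_of_isMinOn hmin).2).symm

end Duality

section L1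

variable {ι : Type*} [Fintype ι]

/-- The `ℓ¹` norm on `ι → ℝ`, as a seminorm because the norm instance there is the sup norm. -/
def l1Seminorm (ι : Type*) [Fintype ι] : Seminorm ℝ (ι → ℝ) :=
  Seminorm.of (fun c => ∑ i, |c i|)
    (fun c c' => by
      rw [← Finset.sum_add_distrib]
      exact Finset.sum_le_sum fun i _ => abs_add_le (c i) (c' i))
    (fun t c => by simp [abs_mul, Finset.mul_sum])

theorem l1Seminorm_apply (c : ι → ℝ) : l1Seminorm ι c = ∑ i, |c i| := rfl

theorem l1Seminorm_single [DecidableEq ι] (i : ι) (t : ℝ) :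
    l1Seminorm ι (Pi.single i t) = |t| := by
  rw [l1Seminorm_apply, Finset.sum_eq_single_of_mem i (Finset.mem_univ i), Pi.single_eq_same]
  intro j _ hj
  rw [Pi.single_eq_of_ne hj, abs_zero]

theorem mul_le_abs_of_abs_le_one {u : ℝ} (hu : |u| ≤ 1) (c : ℝ) : c * u ≤ |c| :=
  calc c * u ≤ |c * u| := le_abs_self _
    _ = |c| * |u| := abs_mul c u
    _ ≤ |c| := mul_le_of_le_one_right (abs_nonneg c) hu

theorem mul_eq_abs_of_sum_eq {c u : ι → ℝ} (hu : ∀ i, |u i| ≤ 1)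
    (h : ∑ i, c i * u i = ∑ i, |c i|) (i : ι) : c i * u i = |c i| :=
  (Finset.sum_eq_sum_iff_of_le fun j _ => mul_le_abs_of_abs_le_one (hu j) (c j)).1 h i
    (Finset.mem_univ i)

variable {E : Type*} [NormedAddCommGroup E] [InnerProductSpace ℝ E]

theorem inner_linearCombination (s : ι → E) (d : E) (c : ι → ℝ) :
    ⟪d, Fintype.linearCombination ℝ s c⟫ = ∑ i, c i * ⟪s i, d⟫ := by
  simp only [Fintype.linearCombination_apply, inner_sum, real_inner_smul_right,
    real_inner_comm]

theorem dualFeasible_l1Seminorm_iff {s : ι → E} {d : E} :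
    DualFeasible (l1Seminorm ι) (Fintype.linearCombination ℝ s) d ↔ ∀ i, |⟪s i, d⟫| ≤ 1 := by
  classical
  constructor
  · intro h i
    have test (t : ℝ) : t * ⟪s i, d⟫ ≤ |t| := by
      simpa [l1Seminorm_single, real_inner_smul_right, real_inner_comm] using h (Pi.single i t)
    have upper : ⟪s i, d⟫ ≤ 1 := by simpa using test 1
    have lower : -⟪s i, d⟫ ≤ 1 := by simpa using test (-1)
    exact abs_le'.2 ⟨upper, lower⟩
  · intro h c
    rw [inner_linearCombination]
    exact Finset.sum_le_sum fun i _ => mul_le_abs_of_abs_le_one (h i) (c i)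

theorem primal_optimality_conditions_general {x : E} {lam : ℝ} (hlam : 0 < lam)
    {s : ι → E} {cstar : ι → ℝ}
    (hmin : ∀ c : ι → ℝ,
      (∑ i, |cstar i|) + (lam / 2) * ‖x - ∑ i, cstar i • s i‖ ^ 2 ≤
        (∑ i, |c i|) + (lam / 2) * ‖x - ∑ i, c i • s i‖ ^ 2)
    {dstar : E} (hd : dstar = lam • (x - ∑ i, cstar i • s i)) :
    (∀ i, |⟪s i, dstar⟫| ≤ 1) ∧
    (∀ i, 0 < cstar i → ⟪s i, dstar⟫ = 1) ∧
    (∀ i, cstar i < 0 → ⟪s i, dstar⟫ = -1) ∧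
    (∀ d : E, (∀ i, |⟪s i, d⟫| ≤ 1) →
      ⟪x, d⟫ - ‖d‖ ^ 2 / (2 * lam) ≤ ⟪x, dstar⟫ - ‖dstar‖ ^ 2 / (2 * lam)) := by
  subst hd
  have isMinOn : IsMinOn
      (primalObjective (l1Seminorm ι) (Fintype.linearCombination ℝ s) x lam) Set.univ cstar :=
    fun c _ => hmin c
  obtain ⟨feasible, touches⟩ := dualFeasible_and_inner_eq_of_isMinOn isMinOn
  rw [dualFeasible_l1Seminorm_iff] at feasible
  rw [inner_linearCombination, l1Seminorm_apply] at touches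
  have slackness := mul_eq_abs_of_sum_eq feasible touches
  refine ⟨feasible, fun i hi => ?_, fun i hi => ?_, fun d hd => ?_⟩
  · exact mul_left_cancel₀ hi.ne' ((slackness i).trans (by rw [abs_of_pos hi, mul_one]))
  · exact mul_left_cancel₀ hi.ne ((slackness i).trans (by rw [abs_of_neg hi, mul_neg_one]))
  · exact isMaxOn_dualObjective_of_isMinOn hlam isMinOn (dualFeasible_l1Seminorm_iff.2 hd)

end L1

theorem primal_optimality_conditions
    (n M : ℕ) (hn : 1 ≤ n) (hM : 1 ≤ M)
    (x : EuclideanSpace ℝ (Fin n)) (lam : ℝ) (hlam : 0 < lam)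
    (s : Fin M → EuclideanSpace ℝ (Fin n))
    (cstar : Fin M → ℝ)
    (hmin : ∀ c : Fin M → ℝ,
      (∑ i, |cstar i|) + (lam / 2) * ‖x - ∑ i, cstar i • s i‖ ^ 2 ≤
        (∑ i, |c i|) + (lam / 2) * ‖x - ∑ i, c i • s i‖ ^ 2)
    (dstar : EuclideanSpace ℝ (Fin n))
    (hd : dstar = lam • (x - ∑ i, cstar i • s i)) :
    (∀ i, |⟪s i, dstar⟫| ≤ 1) ∧
    (∀ i, 0 < cstar i → ⟪s i, dstar⟫ = 1) ∧
    (∀ i, cstar i < 0 → ⟪s i, dstar⟫ = -1) ∧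
    (∀ d : EuclideanSpace ℝ (Fin n), (∀ i, |⟪s i, d⟫| ≤ 1) →
      ⟪x, d⟫ - ‖d‖ ^ 2 / (2 * lam) ≤ ⟪x, dstar⟫ - ‖dstar‖ ^ 2 / (2 * lam)) := by
  exact primal_optimality_conditions_general hlam hmin hd
end
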